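/- In the simplified model, there are constants C > 0 and N such that for all n ≥ N and all 2 ≤ i ≤ m, the pre-averaged Brownian part satisfies |E[X̄_{i,m}²] − σ²/m| ≤ C/n; that is, E[X̄_{i,m}²] = (σ²/m)∫₀² Λ(u)² du + O(1/n) = σ²/m + O(1/n) uniformly in i. -/

import Mathlib

open MeasureTheory ProbabilityTheory Real

noncomputable section

/-- `Λ(u) = -∫₀ᵘ λ(v) dv`. -/
def bigLam (lam : ℝ → ℝ) (u : ℝ) : ℝ := -∫ v in (0:ℝ)..u, lam v

/-- A (normalized) pre-average function: piecewise Lipschitz on `[0,2]`,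
antisymmetric about `1`, and normalized. -/
structure IsPreAverageFn (lam : ℝ → ℝ) : Prop where
  piecewise_lipschitz : ∃ (N : ℕ) (t : ℕ → ℝ) (K : NNReal),
      0 < N ∧ t 0 = 0 ∧ t N = 2 ∧ (∀ i < N, t i < t (i + 1)) ∧
      ∀ i < N, LipschitzOnWith K lam (Set.Ioo (t i) (t (i + 1)))
  antisymm : ∀ t ∈ Set.Icc (0:ℝ) 1, lam t = - lam (2 - t)
  normalized : Real.sqrt (2 * ∫ s in (0:ℝ)..1, (∫ u in (0:ℝ)..s, lam u) ^ 2) = 1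

/-- `m = n / ⌊√n / c⌋`. -/
def mOf (c : ℝ) (n : ℕ) : ℕ := n / ⌊Real.sqrt n / c⌋₊

/-- The indices `j` with `j/n ∈ [(i-2)/m , i/m]`. -/
def blockIdx (n m i : ℕ) : Finset ℕ :=
  (Finset.range (n + 1)).filter fun j =>
    ((i : ℝ) - 2) / m ≤ (j : ℝ) / n ∧ (j : ℝ) / n ≤ (i : ℝ) / m

variable {Ω : Type*}

/-- Pre-averaged value `Ā_{i,m} = (m/n) ∑_{j/n ∈ [(i-2)/m, i/m]} λ(m j/n - (i-2)) A_j`. -/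
def preAvg (lam : ℝ → ℝ) (n m : ℕ) (A : ℕ → Ω → ℝ) (i : ℕ) (ω : Ω) : ℝ :=
  ((m : ℝ) / n) * ∑ j ∈ blockIdx n m i,
    lam ((m : ℝ) * j / n - ((i : ℝ) - 2)) * A j ω

/-- Bias correction `𝔟(λ, A)_{i,m}`. -/
def biasCorr (lam : ℝ → ℝ) (n m : ℕ) (A : ℕ → Ω → ℝ) (i : ℕ) (ω : Ω) : ℝ :=
  ((m : ℝ) ^ 2 / (2 * (n : ℝ) ^ 2)) * ∑ j ∈ (blockIdx n m i).filter (fun j => 1 ≤ j),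
    (lam ((m : ℝ) * j / n - ((i : ℝ) - 2))) ^ 2 * (A j ω - A (j - 1) ω) ^ 2

/-- The simplified model: `(W_{j/n})_j` and `(η_{j,n})_j` form a centered jointly Gaussian
family with `Cov(W_{j/n}, W_{l/n}) = min(j,l)/n`, `(η_{j,n})` standard Gaussian i.i.d.
and uncorrelated with the `W` grid values. -/
def IsSimplifiedModel [MeasureSpace Ω] (n : ℕ) (W η : ℕ → Ω → ℝ) : Prop :=
  (∀ j, Measurable (W j)) ∧ (∀ j, Measurable (η j)) ∧
  (∀ a b : ℕ → ℝ, ∃ v : NNReal,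
    Measure.map (fun ω => ∑ j ∈ Finset.range (n + 1), (a j * W j ω + b j * η j ω)) ℙ
      = gaussianReal 0 v) ∧
  (∀ j l, j ≤ n → l ≤ n → ∫ ω, W j ω * W l ω = (min j l : ℝ) / n) ∧
  (∀ j l, j ≤ n → l ≤ n → ∫ ω, η j ω * η l ω = if j = l then 1 else 0) ∧
  (∀ j l, j ≤ n → l ≤ n → ∫ ω, W j ω * η l ω = 0)

/-- The observations `Y_{j,n} = σ W_{j/n} + τ η_{j,n}`. -/
def obs (σ τ : ℝ) (W η : ℕ → Ω → ℝ) (j : ℕ) (ω : Ω) : ℝ := σ * W j ω + τ * η j ω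

end

lemma pw_cover (t : ℕ → ℝ) (N : ℕ) (x : ℝ) (h0 : t 0 ≤ x) (h1 : x ≤ t N) :
    (∃ i ≤ N, x = t i) ∨ ∃ i < N, x ∈ Set.Ioo (t i) (t (i + 1)) := by
  induction N with
  | zero => exact Or.inl ⟨0, le_rfl, le_antisymm h1 h0⟩
  | succ k ih =>
    rcases le_or_gt x (t k) with h | h
    · rcases ih h with ⟨i, hi, e⟩ | ⟨i, hi, e⟩
      · exact Or.inl ⟨i, by omega, e⟩
      · exact Or.inr ⟨i, by omega, e⟩
    · rcases eq_or_lt_of_le h1 with e | e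
      · exact Or.inl ⟨k + 1, le_rfl, e⟩
      · exact Or.inr ⟨k, by omega, h, e⟩

lemma pw_bdd (lam : ℝ → ℝ) (N : ℕ) (t : ℕ → ℝ) (K : NNReal)
    (h0 : t 0 = 0) (h2 : t N = 2) (hlt : ∀ i < N, t i < t (i + 1))
    (hL : ∀ i < N, LipschitzOnWith K lam (Set.Ioo (t i) (t (i + 1)))) :
    ∃ M : ℝ, 0 ≤ M ∧ ∀ x ∈ Set.Icc (0:ℝ) 2, |lam x| ≤ M := by
  set S := ∑ i ∈ Finset.range (N + 1), (|lam (t i)| + |lam ((t i + t (i + 1)) / 2)|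
      + K * (t (i+1) - t i) * (if i < N then 1 else 0)) with hS
  have hnn : ∀ i ∈ Finset.range (N + 1), 0 ≤ (|lam (t i)| + |lam ((t i + t (i + 1)) / 2)|
      + K * (t (i+1) - t i) * (if i < N then 1 else 0)) := by
    intro i _
    have : 0 ≤ K * (t (i+1) - t i) * (if i < N then (1:ℝ) else 0) := by
      split_ifs with h
      · have := hlt i h
        have := K.2
        have : 0 ≤ t (i+1) - t i := by linarith
        positivity
      · simp
    positivity
  refine ⟨S, Finset.sum_nonneg hnn, fun x hx => ?_⟩
  rcases pw_cover t N x (by rw [h0]; exact hx.1) (by rw [h2]; exact hx.2) with ⟨i, hi, e⟩ | ⟨i, hi, e⟩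
  · refine le_trans ?_ (Finset.single_le_sum hnn (Finset.mem_range.2 (Nat.lt_succ_of_le hi)))
    rw [← e]
    have : 0 ≤ K * (t (i+1) - t i) * (if i < N then (1:ℝ) else 0) := by
      split_ifs with h
      · have := hlt i h
        have := K.2
        have : 0 ≤ t (i+1) - t i := by linarith
        positivity
      · simp
    rw [e] at *
    have := abs_nonneg (lam ((t i + t (i + 1)) / 2))
    linarith
  · refine le_trans ?_ (Finset.single_le_sum hnn (Finset.mem_range.2 (show i < N + 1 by omega)))
    have hm : (t i + t (i + 1)) / 2 ∈ Set.Ioo (t i) (t (i + 1)) := by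
      have := hlt i hi
      constructor <;> linarith
    have h1 := (hL i hi).dist_le_mul x e _ hm
    rw [Real.dist_eq, Real.dist_eq] at h1
    have h3 : |x - (t i + t (i + 1)) / 2| ≤ t (i+1) - t i := by
      rw [abs_le]; constructor <;> linarith [e.1, e.2, hm.1, hm.2]
    have h4 : (K:ℝ) * |x - (t i + t (i + 1)) / 2| ≤ K * (t (i+1) - t i) :=
      mul_le_mul_of_nonneg_left h3 K.2
    have h5 := abs_sub_abs_le_abs_sub (lam x) (lam ((t i + t (i + 1)) / 2))
    have := abs_nonneg (lam (t i))
    simp only [hi, if_true]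
    linarith

/-- The step function with jumps at `a`. -/
noncomputable def stp (a x : ℝ) : ℝ := (if a < x then 1 else 0) + (if a ≤ x then 1 else 0)

lemma stp_mono (a : ℝ) : Monotone (stp a) := by
  intro x y h
  unfold stp
  split_ifs <;> linarith

lemma stp_nonneg (a x : ℝ) : 0 ≤ stp a x := by
  unfold stp; split_ifs <;> norm_num

lemma stp_le (a x : ℝ) : stp a x ≤ 2 := by
  unfold stp; split_ifs <;> norm_num

lemma stp_jump {a x y : ℝ} (h1 : x ≤ a) (h2 : a ≤ y) (h : x < y) : 1 ≤ stp a y - stp a x := by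
  unfold stp
  split_ifs <;> linarith

/-- Truncated `lam`. -/
noncomputable def gtr (lam : ℝ → ℝ) (u x : ℝ) : ℝ := if u ≤ x ∧ x ≤ 2 then lam x else 0

lemma exists_var (lam : ℝ → ℝ) (N : ℕ) (t : ℕ → ℝ) (K : NNReal)
    (h0 : t 0 = 0) (h2 : t N = 2) 
    (hL : ∀ i < N, LipschitzOnWith K lam (Set.Ioo (t i) (t (i + 1))))
    (M : ℝ) (hM0 : 0 ≤ M) (hM : ∀ x ∈ Set.Icc (0:ℝ) 2, |lam x| ≤ M) :
    ∃ T : ℝ, 0 ≤ T ∧ ∀ u ∈ Set.Icc (0:ℝ) 2, ∃ V : ℝ → ℝ, (∀ x, 0 ≤ V x ∧ V x ≤ T) ∧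
      ∀ x y, x ≤ y → |gtr lam u x - gtr lam u y| ≤ V y - V x := by
  refine ⟨K * 2 + 2 * M * ((N + 1) * 2) + 2 * M * 2, by have := K.2; positivity, fun u hu => ?_⟩
  refine ⟨fun x => K * max 0 (min x 2) + 2 * M * ∑ i ∈ Finset.range (N + 1), stp (t i) x
      + 2 * M * stp u x, ?_, ?_⟩
  · intro x
    have hK := K.2
    have a1 : 0 ≤ max 0 (min x 2) := le_max_left _ _
    have a2 : max 0 (min x 2) ≤ 2 := max_le (by norm_num) (min_le_right _ _)
    have a3 : 0 ≤ ∑ i ∈ Finset.range (N + 1), stp (t i) x :=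
      Finset.sum_nonneg fun i _ => stp_nonneg _ _
    have a4 : ∑ i ∈ Finset.range (N + 1), stp (t i) x ≤ (N + 1) * 2 := by
      refine (Finset.sum_le_sum fun i _ => stp_le (t i) x).trans ?_
      simp
    have a5 := stp_nonneg u x
    have a6 := stp_le u x
    constructor
    · have : 0 ≤ (K:ℝ) * max 0 (min x 2) := mul_nonneg hK a1
      positivity
    · have d1 := mul_le_mul_of_nonneg_left a2 hK
      have d2 := mul_le_mul_of_nonneg_left a4 (show 0 ≤ 2 * M by positivity)
      have d3 := mul_le_mul_of_nonneg_left a6 (show 0 ≤ 2 * M by positivity)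
      exact add_le_add (add_le_add d1 d2) d3
  · intro x y hxy
    have hg : ∀ z, |gtr lam u z| ≤ M := by
      intro z
      unfold gtr
      split_ifs with h
      · exact hM z ⟨hu.1.trans h.1, h.2⟩
      · simpa using hM0
    have hgg : |gtr lam u x - gtr lam u y| ≤ 2 * M :=
      (abs_sub _ _).trans (by linarith [hg x, hg y])
    rcases eq_or_lt_of_le hxy with rfl | hlt
    · simp
    have b1 : 0 ≤ K * max 0 (min y 2) - K * max 0 (min x 2) := by
      have : max 0 (min x 2) ≤ max 0 (min y 2) := by gcongr
      have := mul_le_mul_of_nonneg_left this K.2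
      exact sub_nonneg.2 this
    have b2 : ∀ i, 0 ≤ stp (t i) y - stp (t i) x := fun i => sub_nonneg.2 (stp_mono _ hxy)
    have b3 : 0 ≤ stp u y - stp u x := sub_nonneg.2 (stp_mono _ hxy)
    have b4 : 0 ≤ ∑ i ∈ Finset.range (N + 1), (stp (t i) y - stp (t i) x) :=
      Finset.sum_nonneg fun i _ => b2 i
    have key : ∀ P : Prop, (P → |gtr lam u x - gtr lam u y| ≤ 
        (K * max 0 (min y 2) - K * max 0 (min x 2)) + 
        2 * M * (∑ i ∈ Finset.range (N + 1), (stp (t i) y - stp (t i) x)) +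
        2 * M * (stp u y - stp u x)) → P → |gtr lam u x - gtr lam u y| ≤ 
        (K * max 0 (min y 2) + 2 * M * ∑ i ∈ Finset.range (N + 1), stp (t i) y
      + 2 * M * stp u y) - (K * max 0 (min x 2) + 2 * M * ∑ i ∈ Finset.range (N + 1), stp (t i) x
      + 2 * M * stp u x) := by
      intro P h p
      have := h p
      rw [Finset.sum_sub_distrib] at this
      linarith
    refine key True (fun _ => ?_) trivial
    by_cases hu' : x ≤ u ∧ u ≤ y
    · have := stp_jump hu'.1 hu'.2 hlt
      nlinarith [mul_nonneg hM0 b4]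
    by_cases ht : ∃ i ≤ N, x ≤ t i ∧ t i ≤ y
    · obtain ⟨i, hi, h⟩ := ht
      have c1 := stp_jump h.1 h.2 hlt
      have c2 := Finset.single_le_sum (fun i _ => b2 i) (Finset.mem_range.2 (Nat.lt_succ_of_le hi))
      nlinarith [mul_nonneg hM0 b3]
    push Not at ht hu'
    have fin : |gtr lam u x - gtr lam u y| ≤ K * max 0 (min y 2) - K * max 0 (min x 2) → 
      |gtr lam u x - gtr lam u y| ≤ 
        (K * max 0 (min y 2) - K * max 0 (min x 2)) + 
        2 * M * (∑ i ∈ Finset.range (N + 1), (stp (t i) y - stp (t i) x)) +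
        2 * M * (stp u y - stp u x) := by
      intro h
      nlinarith [mul_nonneg hM0 b3, mul_nonneg hM0 b4]
    apply fin
    by_cases hx0 : x ≤ u
    · have hy := hu' hx0
      have e1 : gtr lam u x = 0 := if_neg (by intro h; linarith [h.1])
      have e2 : gtr lam u y = 0 := if_neg (by intro h; linarith [h.1])
      rw [e1, e2]; simpa using b1
    by_cases hx2 : 2 < x
    · have e1 : gtr lam u x = 0 := if_neg (by intro h; linarith [h.2])
      have e2 : gtr lam u y = 0 := if_neg (by intro h; linarith [h.2])
      rw [e1, e2]; simpa using b1
    push Not at hx0 hx2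
    have hy2 : y < 2 := by
      by_contra hcon
      have := ht N le_rfl (by rw [h2]; exact hx2)
      rw [h2] at this
      linarith
    have hu0 := hu.1
    have e1 : gtr lam u x = lam x := if_pos ⟨hx0.le, hx2⟩
    have e2 : gtr lam u y = lam y := if_pos ⟨by linarith, hy2.le⟩
    rw [e1, e2, min_eq_left hx2, min_eq_left hy2.le, max_eq_right (by linarith),
      max_eq_right (by linarith)]
    rcases pw_cover t N x (by rw [h0]; linarith) (by rw [h2]; exact hx2) with ⟨i, hi, e⟩ | ⟨i, hi, e⟩
    · have := ht i hi e.le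
      linarith
    · have hy : y ∈ Set.Ioo (t i) (t (i + 1)) := ⟨by linarith [e.1], by
        by_contra hcon
        have := ht (i + 1) (by omega) e.2.le
        linarith⟩
      have h1 := (hL i hi).dist_le_mul x e y hy
      rw [Real.dist_eq, Real.dist_eq, abs_sub_comm x y, abs_of_pos (sub_pos.2 hlt)] at h1
      linarith

lemma gtr_integrable {g V : ℝ → ℝ} (hV : ∀ x y, x ≤ y → |g x - g y| ≤ V y - V x) (a b : ℝ) :
    IntervalIntegrable g volume a b := by
  have m1 : Monotone V := fun x y h => by
    have := (abs_nonneg _).trans (hV x y h); linarith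
  have m2 : Monotone (fun x => g x + V x) := fun x y h => by
    have := le_trans (le_abs_self _) (hV x y h); simp only; linarith
  have := (m2.intervalIntegrable (μ := volume) (a := a) (b := b)).sub
    (m1.intervalIntegrable (μ := volume) (a := a) (b := b))
  refine this.congr ?_
  intro x _
  simp

lemma riemann {g V : ℝ → ℝ} {T : ℝ} (hT : ∀ x, 0 ≤ V x ∧ V x ≤ T)
    (hV : ∀ x y, x ≤ y → |g x - g y| ≤ V y - V x) (h : ℝ) (hh : 0 ≤ h) (b : ℝ) (J : ℕ) :
    |h * ∑ j ∈ Finset.range J, g (h * j - b) - ∫ x in (-b)..(h * J - b), g x| ≤ h * T := by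
  have hintg : ∀ k < J, IntervalIntegrable g volume ((fun j : ℕ => h * j - b) k)
      ((fun j : ℕ => h * j - b) (k + 1)) := fun k _ => gtr_integrable hV _ _
  have e := intervalIntegral.sum_integral_adjacent_intervals hintg
  simp only [Nat.cast_zero, mul_zero, zero_sub] at e
  rw [← e, Finset.mul_sum, ← Finset.sum_sub_distrib]
  have cell : ∀ j ∈ Finset.range J, |h * g (h * j - b) - ∫ x in (h * j - b)..(h * (j + 1 : ℕ) - b), g x|
      ≤ h * V (h * (j + 1 : ℕ) - b) - h * V (h * j - b) := by
    intro j _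
    have hle : h * j - b ≤ h * (j + 1 : ℕ) - b := by push_cast; linarith
    have e1 : h * g (h * j - b) = ∫ x in (h * j - b)..(h * (j + 1 : ℕ) - b), g (h * j - b) := by
      rw [intervalIntegral.integral_const]; push_cast; simp only [smul_eq_mul]; ring
    rw [e1, ← intervalIntegral.integral_sub (by simp) (gtr_integrable hV _ _)]
    have := intervalIntegral.norm_integral_le_of_norm_le_const (a := h * j - b)
      (b := h * (j + 1 : ℕ) - b) (f := fun x => g (h * j - b) - g x)
      (C := V (h * (j + 1 : ℕ) - b) - V (h * j - b)) (by
        intro x hx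
        rw [Set.uIoc_of_le hle] at hx
        have q1 := hV _ _ hx.1.le
        have q2 := (abs_nonneg _).trans (hV _ _ hx.2)
        rw [Real.norm_eq_abs]; linarith)
    rw [Real.norm_eq_abs] at this
    refine this.trans (le_of_eq ?_)
    rw [abs_of_nonneg (by linarith)]
    push_cast; ring
  refine (Finset.abs_sum_le_sum_abs _ _).trans ((Finset.sum_le_sum cell).trans ?_)
  rw [Finset.sum_range_sub (fun j : ℕ => h * V (h * j - b)), ← mul_sub]
  apply mul_le_mul_of_nonneg_left _ hh
  have := hT (h * J - b)
  have := hT (h * (0:ℕ) - b)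
  linarith

lemma gtr_integral (lam : ℝ → ℝ) (u a R : ℝ) (h1 : a ≤ u) (hu : u ≤ 2) (h2 : 2 ≤ R) :
    ∫ x in a..R, gtr lam u x = ∫ x in u..2, lam x := by
  rw [intervalIntegral.integral_of_le (by linarith), intervalIntegral.integral_of_le hu,
    ← integral_Icc_eq_integral_Ioc, ← integral_Icc_eq_integral_Ioc]
  have : gtr lam u = (Set.Icc u 2).indicator lam := by
    ext x; simp [gtr, Set.indicator, Set.mem_Icc]
  rw [this, setIntegral_indicator measurableSet_Icc,
    Set.inter_eq_self_of_subset_right (Set.Icc_subset_Icc h1 h2)]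

lemma lam_facts (lam : ℝ → ℝ) (hl : IsPreAverageFn lam)
    (hintg : IntervalIntegrable lam volume 0 2) :
    (∫ x in (0:ℝ)..2, lam x = 0) ∧ ∫ u in (0:ℝ)..2, (∫ x in u..2, lam x) ^ 2 = 1 := by
  have sub : ∀ a b, a ∈ Set.Icc (0:ℝ) 2 → b ∈ Set.Icc (0:ℝ) 2 → IntervalIntegrable lam volume a b := by
    intro a b ha hb
    refine hintg.mono_set ?_
    rw [Set.uIcc_of_le (by norm_num : (0:ℝ) ≤ 2)]
    exact Set.uIcc_subset_Icc ha hb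
  have anti : ∀ t ∈ Set.Icc (0:ℝ) 2, lam (2 - t) = - lam t := by
    intro t ht
    rcases le_total t 1 with h | h
    · have := hl.antisymm t ⟨ht.1, h⟩; linarith
    · have := hl.antisymm (2 - t) ⟨by linarith [ht.2], by linarith⟩
      rw [sub_sub_cancel] at this; exact this
  have refl : ∀ u ∈ Set.Icc (0:ℝ) 2, ∫ x in (0:ℝ)..(2-u), lam x = - ∫ x in u..2, lam x := by
    intro u hu
    have := intervalIntegral.integral_comp_sub_left (a := u) (b := 2) lam 2
    rw [sub_self] at this
    rw [← this, ← intervalIntegral.integral_neg]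
    refine intervalIntegral.integral_congr fun x hx => ?_
    rw [Set.uIcc_of_le hu.2] at hx
    exact anti x ⟨hu.1.trans hx.1, hx.2⟩
  have z : ∫ x in (0:ℝ)..2, lam x = 0 := by
    have := refl 0 (by norm_num)
    rw [sub_zero] at this
    linarith
  have gh : ∀ u ∈ Set.Icc (0:ℝ) 2, ∫ x in u..2, lam x = - ∫ x in (0:ℝ)..u, lam x := by
    intro u hu
    have := intervalIntegral.integral_add_adjacent_intervals
      (sub 0 u (by norm_num) hu) (sub u 2 hu (by norm_num))
    linarith
  refine ⟨z, ?_⟩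
  have e1 : ∫ u in (0:ℝ)..2, (∫ x in u..2, lam x) ^ 2 = ∫ u in (0:ℝ)..2, (∫ x in (0:ℝ)..u, lam x) ^ 2 := by
    refine intervalIntegral.integral_congr fun x hx => ?_
    rw [Set.uIcc_of_le (by norm_num)] at hx
    beta_reduce
    rw [gh x hx, neg_sq]
  have cont : ContinuousOn (fun u => (∫ x in (0:ℝ)..u, lam x) ^ 2) (Set.Icc 0 2) := by
    have := intervalIntegral.continuousOn_primitive_interval' hintg (a := 0) (by simp)
    rw [Set.uIcc_of_le (by norm_num)] at this
    exact this.pow 2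
  have i1 : IntervalIntegrable (fun u => (∫ x in (0:ℝ)..u, lam x) ^ 2) volume 0 1 :=
    (cont.mono (Set.Icc_subset_Icc le_rfl (by norm_num))).intervalIntegrable_of_Icc (by norm_num)
  have i2 : IntervalIntegrable (fun u => (∫ x in (0:ℝ)..u, lam x) ^ 2) volume 1 2 :=
    (cont.mono (Set.Icc_subset_Icc (by norm_num) le_rfl)).intervalIntegrable_of_Icc (by norm_num)
  have e2 : ∫ u in (1:ℝ)..2, (∫ x in (0:ℝ)..u, lam x) ^ 2 = ∫ u in (0:ℝ)..1, (∫ x in (0:ℝ)..u, lam x) ^ 2 := by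
    have := intervalIntegral.integral_comp_sub_left (a := 0) (b := 1) 
      (fun u => (∫ x in (0:ℝ)..u, lam x) ^ 2) 2
    rw [show (2:ℝ) - 1 = 1 by norm_num, sub_zero] at this
    rw [← this]
    refine intervalIntegral.integral_congr fun x hx => ?_
    rw [Set.uIcc_of_le (by norm_num)] at hx
    have hx' : x ∈ Set.Icc (0:ℝ) 2 := ⟨hx.1, by linarith [hx.2]⟩
    beta_reduce
    rw [refl x hx', gh x hx', neg_neg]
  rw [e1, ← intervalIntegral.integral_add_adjacent_intervals i1 i2, e2, ← two_mul]
  have := hl.normalized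
  rwa [Real.sqrt_eq_one] at this

lemma gtr_prod_eq (lam : ℝ → ℝ) (s t u : ℝ) (hu : 0 ≤ u) :
    gtr lam u s * gtr lam u t = (gtr lam 0 s * gtr lam 0 t) * (Set.Iic (min s t)).indicator 1 u := by
  simp only [gtr, Set.indicator, Set.mem_Iic, le_min_iff, Pi.one_apply]
  by_cases a : u ≤ s <;> by_cases b : u ≤ t <;> simp [a, b]
  have a' := hu.trans a
  have b' := hu.trans b
  simp [a', b']

lemma ind_integrable (r : ℝ) : IntervalIntegrable ((Set.Iic r).indicator (1 : ℝ → ℝ)) volume 0 2 := by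
  have : Antitone ((Set.Iic r).indicator (1 : ℝ → ℝ)) := by
    intro x y h
    simp only [Set.indicator, Set.mem_Iic, Pi.one_apply]
    split_ifs <;> first | linarith | simp
  exact this.intervalIntegrable

lemma gtr_prod_integrable (lam : ℝ → ℝ) (s t : ℝ) :
    IntervalIntegrable (fun u => gtr lam u s * gtr lam u t) volume 0 2 := by
  refine ((ind_integrable (min s t)).const_mul (gtr lam 0 s * gtr lam 0 t)).congr ?_
  intro u hu
  rw [Set.uIoc_of_le (by norm_num)] at hu
  exact (gtr_prod_eq lam s t u hu.1.le).symm

lemma gtr_prod_integral (lam : ℝ → ℝ) (s t : ℝ) :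
    ∫ u in (0:ℝ)..2, gtr lam u s * gtr lam u t = gtr lam 0 s * gtr lam 0 t * min s t := by
  have e : ∫ u in (0:ℝ)..2, gtr lam u s * gtr lam u t = 
      ∫ u in (0:ℝ)..2, gtr lam 0 s * gtr lam 0 t * (Set.Iic (min s t)).indicator (1 : ℝ → ℝ) u := by
    refine intervalIntegral.integral_congr fun u hu => ?_
    rw [Set.uIcc_of_le (by norm_num)] at hu
    exact gtr_prod_eq lam s t u hu.1
  rw [e, intervalIntegral.integral_const_mul]
  by_cases hs : 0 ≤ s ∧ s ≤ 2
  swap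
  · simp [gtr, hs]
  by_cases ht : 0 ≤ t ∧ t ≤ 2
  swap
  · simp [gtr, ht]
  congr 1
  have h1 : 0 ≤ min s t := le_min hs.1 ht.1
  have h2 : min s t ≤ 2 := (min_le_left _ _).trans hs.2
  rw [intervalIntegral.integral_of_le (by norm_num), setIntegral_indicator measurableSet_Iic]
  have : Set.Ioc (0:ℝ) 2 ∩ Set.Iic (min s t) = Set.Ioc 0 (min s t) := by
    ext x; simp only [Set.mem_inter_iff, Set.mem_Ioc, Set.mem_Iic]
    constructor
    · rintro ⟨⟨a, _⟩, b⟩; exact ⟨a, b⟩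
    · rintro ⟨a, b⟩; exact ⟨⟨a, b.trans h2⟩, b⟩
  rw [this]
  simp [h1]

/-- deterministic identity -/
lemma quad_eq (lam : ℝ → ℝ) (h b : ℝ) (J : ℕ) :
    ∑ j ∈ Finset.range J, ∑ l ∈ Finset.range J, 
      gtr lam 0 (h * j - b) * gtr lam 0 (h * l - b) * min (h * j - b) (h * l - b)
    = ∫ u in (0:ℝ)..2, (∑ j ∈ Finset.range J, gtr lam u (h * j - b)) ^ 2 := by
  simp_rw [sq, Finset.sum_mul_sum]
  rw [intervalIntegral.integral_finsetSum]
  · refine Finset.sum_congr rfl fun j _ => ?_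
    rw [intervalIntegral.integral_finsetSum]
    · exact Finset.sum_congr rfl fun l _ => (gtr_prod_integral _ _ _).symm
    · exact fun l _ => gtr_prod_integrable _ _ _
  · exact fun j _ => by
      have := IntervalIntegrable.sum (Finset.range J) 
        (f := fun (l : ℕ) u => gtr lam u (h * j - b) * gtr lam u (h * l - b)) (μ := volume) (a := 0) (b := 2)
        (fun l _ => gtr_prod_integrable lam _ _)
      refine this.congr fun u _ => ?_
      simp [Finset.sum_apply]

lemma quad_integrable (lam : ℝ → ℝ) (h b : ℝ) (J : ℕ) : IntervalIntegrable
    (fun u => (∑ j ∈ Finset.range J, gtr lam u (h * j - b)) ^ 2) volume 0 2 := by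
  simp_rw [sq, Finset.sum_mul_sum]
  have := IntervalIntegrable.sum (Finset.range J ×ˢ Finset.range J) 
        (f := fun (p : ℕ × ℕ) u => gtr lam u (h * p.1 - b) * gtr lam u (h * p.2 - b)) (μ := volume) (a := 0) (b := 2)
        (fun l _ => gtr_prod_integrable lam _ _)
  refine this.congr fun u _ => ?_
  simp [Finset.sum_apply, Finset.sum_product]

lemma model_memLp {Ω : Type*} [MeasureSpace Ω] (n : ℕ) (W η : ℕ → Ω → ℝ)
    (hm : IsSimplifiedModel n W η) (j : ℕ) (hj : j ≤ n) : MemLp (W j) 2 ℙ := by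
  obtain ⟨hW, hη, hG, -⟩ := hm
  obtain ⟨v, hv⟩ := hG (fun k => if k = j then 1 else 0) (fun _ => 0)
  have : (fun ω => ∑ k ∈ Finset.range (n + 1), ((if k = j then (1:ℝ) else 0) * W k ω + 0 * η k ω)) = W j := by
    ext ω
    simp [Finset.mem_range, Nat.lt_succ_of_le hj]
  rw [this] at hv
  have h2 : MemLp id 2 (Measure.map (W j) ℙ) := by
    rw [hv]; exact memLp_id_gaussianReal 2
  exact h2.comp_of_map (hW j).aemeasurable

lemma block_sum {n m i : ℕ} (hn : 0 < n) (hm : 0 < m) (lam : ℝ → ℝ) (A : ℕ → ℝ) :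
    ∑ j ∈ blockIdx n m i, lam ((m : ℝ) * j / n - ((i : ℝ) - 2)) * A j =
    ∑ j ∈ Finset.range (n + 1), gtr lam 0 ((m : ℝ) / n * j - ((i : ℝ) - 2)) * A j := by
  unfold blockIdx
  rw [Finset.sum_filter]
  refine Finset.sum_congr rfl fun j _ => ?_
  have hn' : (0:ℝ) < n := by exact_mod_cast hn
  have hm' : (0:ℝ) < m := by exact_mod_cast hm
  have e : (m : ℝ) * j / n = (m : ℝ) / n * j := by ring
  have e1 : ((i : ℝ) - 2) / m ≤ (j : ℝ) / n ↔ 0 ≤ (m : ℝ) / n * j - ((i : ℝ) - 2) := by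
    rw [← e, div_le_div_iff₀ hm' hn', sub_nonneg, le_div_iff₀ hn', mul_comm (j:ℝ)]
  have e2 : (j : ℝ) / n ≤ (i : ℝ) / m ↔ (m : ℝ) / n * j - ((i : ℝ) - 2) ≤ 2 := by
    rw [← e, div_le_div_iff₀ hn' hm', sub_le_iff_le_add, div_le_iff₀ hn', mul_comm (j:ℝ)]
    ring_nf
  simp only [e1, e2, e, gtr]
  split_ifs <;> simp

lemma moment {Ω : Type*} [MeasureSpace Ω] {n m i : ℕ} (hn : 0 < n) (hm : 0 < m) (W η : ℕ → Ω → ℝ)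
    (hmod : IsSimplifiedModel n W η) (lam : ℝ → ℝ) (σ : ℝ) (h b : ℝ) (hh : h = (m:ℝ) / n) (hb : b = (i:ℝ) - 2) :
    ∫ ω, (preAvg lam n m (fun j ω => σ * W j ω) i ω) ^ 2 =
    σ ^ 2 / m * ((∫ u in (0:ℝ)..2, (h * ∑ j ∈ Finset.range (n + 1), gtr lam u (h * j - b)) ^ 2)
      + b * (h * ∑ j ∈ Finset.range (n + 1), gtr lam 0 (h * j - b)) ^ 2) := by
  have hn' : (0:ℝ) < n := by exact_mod_cast hn
  have hm' : (0:ℝ) < m := by exact_mod_cast hm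
  have e0 : ∀ ω, (preAvg lam n m (fun j ω => σ * W j ω) i ω) ^ 2 = 
      ∑ j ∈ Finset.range (n + 1), ∑ l ∈ Finset.range (n + 1), 
        (h ^ 2 * σ ^ 2 * (gtr lam 0 (h * j - b) * gtr lam 0 (h * l - b))) * (W j ω * W l ω) := by
    intro ω
    unfold preAvg
    rw [block_sum hn hm lam (fun j => σ * W j ω), ← hh, ← hb, mul_pow, sq (∑ j ∈ _, _), Finset.sum_mul_sum,
      Finset.mul_sum]
    refine Finset.sum_congr rfl fun j _ => ?_
    rw [Finset.mul_sum]
    refine Finset.sum_congr rfl fun l _ => ?_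
    ring
  have hI : ∀ j ∈ Finset.range (n + 1), ∀ l ∈ Finset.range (n + 1), 
      Integrable (fun ω => (h ^ 2 * σ ^ 2 * (gtr lam 0 (h * j - b) * gtr lam 0 (h * l - b))) * (W j ω * W l ω)) := by
    intro j hj l hl
    refine Integrable.const_mul ?_ _
    exact (model_memLp n W η hmod j (Nat.lt_succ_iff.1 (Finset.mem_range.1 hj))).integrable_mul
      (model_memLp n W η hmod l (Nat.lt_succ_iff.1 (Finset.mem_range.1 hl)))
  simp_rw [e0]
  rw [integral_finsetSum _ (fun j hj => integrable_finsetSum _ (hI j hj))]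
  have e1 : ∀ j ∈ Finset.range (n + 1), ∫ ω, ∑ l ∈ Finset.range (n + 1), 
        (h ^ 2 * σ ^ 2 * (gtr lam 0 (h * j - b) * gtr lam 0 (h * l - b))) * (W j ω * W l ω) 
      = ∑ l ∈ Finset.range (n + 1), (σ ^ 2 / m * h ^ 2 * 
         (gtr lam 0 (h * j - b) * gtr lam 0 (h * l - b) * min (h * j - b) (h * l - b))
         + σ ^ 2 / m * b * h ^ 2 * (gtr lam 0 (h * j - b) * gtr lam 0 (h * l - b))) := by
    intro j hj
    rw [integral_finsetSum _ (hI j hj)]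
    refine Finset.sum_congr rfl fun l hl => ?_
    rw [integral_const_mul, hmod.2.2.2.1 j l (Nat.lt_succ_iff.1 (Finset.mem_range.1 hj))
      (Nat.lt_succ_iff.1 (Finset.mem_range.1 hl))]
    have hh0 : 0 ≤ h := by rw [hh]; positivity
    have : min (h * j - b) (h * l - b) = h * min (j:ℝ) l - b := by
      rw [min_sub_sub_right, mul_min_of_nonneg _ _ hh0]
    rw [this, show (min (j:ℝ) l / n) = (h * min (j:ℝ) l) / m by rw [hh]; field_simp]
    ring
  rw [Finset.sum_congr rfl e1]
  simp_rw [mul_pow, intervalIntegral.integral_const_mul]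
  rw [← quad_eq, sq (∑ j ∈ _, _), Finset.sum_mul_sum]
  simp_rw [Finset.sum_add_distrib, ← Finset.mul_sum]
  ring

theorem preAveragedBM_second_moment (σ τ c : ℝ) (hσ : 0 < σ) (hτ : 0 < τ) (hc : 0 < c)
    (lam : ℝ → ℝ) (hlam : IsPreAverageFn lam)
    (Ω : ℕ → Type*) [∀ n, MeasureSpace (Ω n)] [∀ n, IsProbabilityMeasure (ℙ : Measure (Ω n))]
    (W η : (n : ℕ) → ℕ → Ω n → ℝ)
    (hmodel : ∀ n, IsSimplifiedModel n (W n) (η n)) :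
    ∃ C > 0, ∃ N : ℕ, ∀ n ≥ N, ∀ i : ℕ, 2 ≤ i → i ≤ mOf c n →
      |(∫ ω, (preAvg lam n (mOf c n) (fun j ω => σ * W n j ω) i ω) ^ 2)
          - σ ^ 2 / (mOf c n : ℝ)| ≤ C / n := by
  obtain ⟨Np, t, K, hNp, h0, h2, hlt, hL⟩ := hlam.piecewise_lipschitz
  obtain ⟨M, hM0, hM⟩ := pw_bdd lam Np t K h0 h2 hlt hL
  obtain ⟨T, hT0, hT⟩ := exists_var lam Np t K h0 h2 hL M hM0 hM
  have hintg : IntervalIntegrable lam volume 0 2 := by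
    obtain ⟨V, -, hV⟩ := hT 0 (by norm_num)
    refine (gtr_integrable hV 0 2).congr fun x hx => ?_
    rw [Set.uIoc_of_le (by norm_num)] at hx
    exact if_pos ⟨hx.1.le, hx.2⟩
  obtain ⟨hz, hone⟩ := lam_facts lam hlam hintg
  have hGb : ∀ u ∈ Set.Icc (0:ℝ) 2, |∫ x in u..2, lam x| ≤ 2 * M := by
    intro u hu
    have := intervalIntegral.norm_integral_le_of_norm_le_const (a := u) (b := 2) (f := lam) (C := M) (by
      intro x hx
      rw [Set.uIoc_of_le hu.2] at hx
      exact hM x ⟨hu.1.trans hx.1.le, hx.2⟩)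
    rw [Real.norm_eq_abs, abs_of_nonneg (show (0:ℝ) ≤ 2 - u by linarith [hu.2])] at this
    nlinarith [hu.1]
  have hGi : IntervalIntegrable (fun u => (∫ x in u..2, lam x) ^ 2) volume 0 2 := by
    have h3 := intervalIntegral.continuousOn_primitive_interval' hintg (a := 2) (by simp)
    refine ContinuousOn.intervalIntegrable ?_
    refine (h3.pow 2).congr fun u _ => ?_
    simp only [Pi.pow_apply]
    rw [intervalIntegral.integral_symm, neg_sq]
  refine ⟨σ ^ 2 * (2 * (T * (T + 4 * M)) + 4 * c ^ 2 * T ^ 2) + 1, by positivity,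
    ⌈4 * c ^ 2⌉₊ + 1, fun n hn i hi2 him => ?_⟩
  set m := mOf c n with hmdef
  have hn0 : 0 < n := by omega
  have hm0 : 0 < m := by omega
  have hn' : (0:ℝ) < n := by exact_mod_cast hn0
  have hm' : (0:ℝ) < m := by exact_mod_cast hm0
  obtain ⟨h, hh⟩ : ∃ h : ℝ, h = (m:ℝ) / n := ⟨_, rfl⟩
  obtain ⟨b, hb⟩ : ∃ b : ℝ, b = (i:ℝ) - 2 := ⟨_, rfl⟩
  have hb0 : 0 ≤ b := by
    have : (2:ℝ) ≤ i := by exact_mod_cast hi2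
    linarith
  have hbm : b + 2 ≤ m := by
    have : (i:ℝ) ≤ m := by exact_mod_cast him
    linarith
  have hh0 : 0 < h := by rw [hh]; positivity
  have hh1 : h ≤ 1 := by
    rw [hh, div_le_one hn']
    exact_mod_cast Nat.div_le_self _ _
  have hhn : h * n = m := by rw [hh]; field_simp
  have hhsq : h ^ 2 ≤ 4 * c ^ 2 / n := by
    have hs : 0 < Real.sqrt n := Real.sqrt_pos.2 hn'
    have hss : Real.sqrt n ^ 2 = n := Real.sq_sqrt hn'.le
    have h4 : 4 * c ^ 2 ≤ n := by
      refine (Nat.le_ceil _).trans ?_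
      exact_mod_cast (by omega : ⌈4 * c ^ 2⌉₊ ≤ n)
    have h5 : 2 * c ≤ Real.sqrt n := Real.le_sqrt_of_sq_le (by linarith)
    have h6 : 2 ≤ Real.sqrt n / c := by rw [le_div_iff₀ hc]; exact h5
    have h7 := Nat.lt_floor_add_one (Real.sqrt n / c)
    have h8 : Real.sqrt n / c / 2 ≤ (⌊Real.sqrt n / c⌋₊ : ℝ) := by linarith
    have h9 : (m:ℝ) * ⌊Real.sqrt n / c⌋₊ ≤ n := by
      exact_mod_cast Nat.div_mul_le_self n ⌊Real.sqrt n / c⌋₊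
    have h10 : (m:ℝ) * (Real.sqrt n / c / 2) ≤ n :=
      (mul_le_mul_of_nonneg_left h8 hm'.le).trans h9
    have h11 : h * Real.sqrt n ≤ 2 * c := by
      have : (m:ℝ) * (Real.sqrt n / c / 2) = h * Real.sqrt n * n / (2 * c) := by
        rw [← hhn]; field_simp
      rw [this, div_le_iff₀ (by positivity)] at h10
      have h12 : h * Real.sqrt n * n ≤ 2 * c * n := by linarith
      exact le_of_mul_le_mul_right h12 hn'
    rw [le_div_iff₀ hn']
    have : h ^ 2 * n = (h * Real.sqrt n) ^ 2 := by rw [mul_pow, hss]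
    rw [this]
    have := pow_le_pow_left₀ (by positivity) h11 2
    linarith
  have hF : ∀ u ∈ Set.Icc (0:ℝ) 2,
      |h * ∑ j ∈ Finset.range (n + 1), gtr lam u (h * j - b) - ∫ x in u..2, lam x| ≤ h * T := by
    intro u hu
    obtain ⟨V, hV1, hV2⟩ := hT u hu
    have := riemann hV1 hV2 h hh0.le b (n + 1)
    rwa [gtr_integral lam u _ _ (by linarith [hu.1]) hu.2 (by push_cast; linarith)] at this
  rw [moment hn0 hm0 (W n) (η n) (hmodel n) lam σ h b hh hb]
  have hF0 : (h * ∑ j ∈ Finset.range (n + 1), gtr lam 0 (h * j - b)) ^ 2 ≤ (h * T) ^ 2 := by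
    have := hF 0 (by norm_num)
    rw [hz, sub_zero] at this
    exact sq_le_sq' (abs_le.1 this).1 (abs_le.1 this).2
  have hQ : |(∫ u in (0:ℝ)..2, (h * ∑ j ∈ Finset.range (n + 1), gtr lam u (h * j - b)) ^ 2) - 1|
      ≤ h * (T * (T + 4 * M)) * 2 := by
    have hFi : IntervalIntegrable
        (fun u => (h * ∑ j ∈ Finset.range (n + 1), gtr lam u (h * j - b)) ^ 2) volume 0 2 := by
      simp_rw [mul_pow]
      exact (quad_integrable lam h b (n + 1)).const_mul _
    rw [← hone, ← intervalIntegral.integral_sub hFi hGi]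
    have := intervalIntegral.norm_integral_le_of_norm_le_const (a := 0) (b := 2)
      (f := fun u => (h * ∑ j ∈ Finset.range (n + 1), gtr lam u (h * j - b)) ^ 2
        - (∫ x in u..2, lam x) ^ 2) (C := h * (T * (T + 4 * M))) (by
      intro u hu
      rw [Set.uIoc_of_le (by norm_num)] at hu
      have hu' : u ∈ Set.Icc (0:ℝ) 2 := ⟨hu.1.le, hu.2⟩
      have k1 := hF u hu'
      have k2 := hGb u hu'
      rw [Real.norm_eq_abs]
      generalize h * ∑ j ∈ Finset.range (n + 1), gtr lam u (h * j - b) = F at *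
      generalize ∫ x in u..2, lam x = G at *
      have k3 : F ^ 2 - G ^ 2 = (F - G) * ((F - G) + 2 * G) := by ring
      have k4 : |(F - G) + 2 * G| ≤ T + 4 * M := by
        refine (abs_add_le _ _).trans ?_
        rw [abs_mul, abs_two]
        have : h * T ≤ T := by nlinarith
        linarith
      rw [k3, abs_mul, ← mul_assoc]
      exact mul_le_mul k1 k4 (abs_nonneg _) (by positivity))
    rw [Real.norm_eq_abs] at this
    norm_num at this
    exact this
  generalize (∫ u in (0:ℝ)..2, (h * ∑ j ∈ Finset.range (n + 1), gtr lam u (h * j - b)) ^ 2) = Q at *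
  generalize hS : (h * ∑ j ∈ Finset.range (n + 1), gtr lam 0 (h * j - b)) ^ 2 = S at *
  have hS0 : 0 ≤ S := by rw [← hS]; positivity
  have e : σ ^ 2 / m * (Q + b * S) - σ ^ 2 / m = σ ^ 2 / m * (Q - 1) + σ ^ 2 * (b / m) * S := by
    field_simp; ring
  rw [e]
  have p1 : |σ ^ 2 / m * (Q - 1)| ≤ σ ^ 2 * (2 * (T * (T + 4 * M))) / n := by
    rw [abs_mul, abs_of_nonneg (by positivity)]
    refine (mul_le_mul_of_nonneg_left hQ (by positivity)).trans (le_of_eq ?_)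
    rw [hh]; field_simp
  have p2 : |σ ^ 2 * (b / m) * S| ≤ σ ^ 2 * (4 * c ^ 2 * T ^ 2) / n := by
    rw [abs_of_nonneg (by positivity)]
    have q1 : b / m ≤ 1 := by rw [div_le_one hm']; linarith
    calc σ ^ 2 * (b / m) * S ≤ σ ^ 2 * 1 * (h * T) ^ 2 := by gcongr
      _ = σ ^ 2 * T ^ 2 * h ^ 2 := by ring
      _ ≤ σ ^ 2 * T ^ 2 * (4 * c ^ 2 / n) := by gcongr
      _ = _ := by ring
  refine (abs_add_le _ _).trans ((add_le_add p1 p2).trans ?_)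
  rw [← add_div]
  refine div_le_div_of_nonneg_right ?_ hn'.le
  linarith
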